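/- Fix an integer q ≥ 2. Let A = ((q+1) − Real.sqrt ((q+1)^2 − 4))/2, let D = ((q−1)^(3*(q−1)) * (q−A)^(q−A)) / (q^(2*q) * A^A * (1−A)^(2*(1−A)) * (q−2+A)^(q−2+A) * (q−1−A)^(q−1−A)) (real powers), and let B(q) = 2*q / (Real.log (1/D) / Real.log 2). Then for every real ε > 0 there exists N such that for all n ≥ N there is a k with k ≤ B(q)·(1+ε)·(log n / log 2) and a 3-covering array with k rows and n columns over the alphabet Fin q. -/

import Mathlib

/-!
Draw `2n` columns independently and uniformly from the balanced words of length `qm`, those in which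
each letter occurs exactly `m` times. Give a letter weight `x` if it is the prescribed one and `1`
otherwise: balance fixes the total weight of a tuple of columns at `x ^ (tm)`, so the number of
`t`-tuples missing a given pattern is at most the `qm`-th power of the total weight of the rows
different from that pattern, divided by `x ^ (tm)`. By Stirling, a fraction at most
`poly(m) * missRate t q x ^ m` of the tuples is bad. Once at most `n` bad tuples are expected,
deleting one column of each leaves a covering array, and it suffices to take `m` slightly above
`(t - 1) * log n / log (1 / missRate t q x)`.

For `t = 3` the best weight is `x = (q - 1) / (q - 1 - A)`, where `A ^ 2 - (q + 1) * A + 1 = 0`, and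
its rate is `D`. It is less than `1` because `log (missRate t q (exp s))` is convex in `s` and
already negative at `s = 0`.
-/

open Finset Function

variable {R α ι C V : Type*}

section BalancedWords

variable [Fintype R] [DecidableEq α]

/-- The columns of length `R` over `α` in which every letter occurs exactly `m` times; they exist
only if `card R = card α * m`. -/
abbrev BalancedWord (R α : Type*) [Fintype R] [DecidableEq α] (m : ℕ) : Type _ :=
  {f : R → α // ∀ a, #{r | f r = a} = m}

/-- The columns `g i`, read side by side, contain no row equal to the pattern `w`. -/
abbrev Misses (g : ι → R → α) (w : ι → α) : Prop :=
  ∀ r, ∃ i, g i r ≠ w i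

/-- The exponential rate, per occurrence `m` of a letter, of the bound on the probability that `t`
random balanced words over `q` letters miss a fixed pattern. The weight `x > 0` of the prescribed
letter is a free parameter. -/
noncomputable def missRate (t q : ℕ) (x : ℝ) : ℝ :=
  ((q - 1 + x) ^ t - x ^ t) ^ q / (x * q ^ q) ^ t

lemma BalancedWord.prod_ite_eq {m : ℕ} (f : BalancedWord R α m) (a : α) (x : ℝ) :
    ∏ r, (if f.1 r = a then x else 1) = x ^ m := by
  rw [prod_ite, prod_const, f.2, prod_const_one, mul_one]

lemma sum_ne_prod_ite_eq [Fintype ι] [DecidableEq ι] [Fintype α] (w : ι → α) (x : ℝ) :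
    ∑ v : ι → α with v ≠ w, ∏ i, (if v i = w i then x else 1) =
      (Fintype.card α - 1 + x) ^ Fintype.card ι - x ^ Fintype.card ι := by
  have letters (i : ι) : ∑ a, (if a = w i then x else 1) = Fintype.card α - 1 + x := by
    rw [← add_sum_erase _ _ (mem_univ (w i)), if_pos rfl,
      sum_congr rfl fun a ha => if_neg (ne_of_mem_erase ha), sum_const, nsmul_one,
      cast_card_erase_of_mem (mem_univ _), card_univ, add_comm]
  have words : ∑ v : ι → α, ∏ i, (if v i = w i then x else 1) =
      (Fintype.card α - 1 + x) ^ Fintype.card ι := by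
    rw [← card_univ (α := ι), ← prod_const, ← prod_congr rfl fun i _ => letters i,
      prod_univ_sum, Fintype.piFinset_univ]
  rw [filter_ne', sum_erase_eq_sub (mem_univ w), words]
  simp only [if_true, prod_const, card_univ]

lemma card_misses_mul_pow_le [Fintype ι] [DecidableEq ι] [Fintype α] [DecidableEq R] (m : ℕ)
    (w : ι → α) {x : ℝ} (hx : 0 ≤ x) :
    (#{g : ι → BalancedWord R α m | Misses (fun i => (g i).1) w} : ℝ) * (x ^ Fintype.card ι) ^ m ≤
      ((Fintype.card α - 1 + x) ^ Fintype.card ι - x ^ Fintype.card ι) ^ Fintype.card R := by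
  let weight (v : ι → α) : ℝ := ∏ i, if v i = w i then x else 1
  have weight_nonneg (v : ι → α) : 0 ≤ weight v :=
    prod_nonneg fun i _ => by split_ifs <;> positivity
  have sum_weight : ∑ v with v ≠ w, weight v = _ := sum_ne_prod_ite_eq w x
  let rows (g : ι → BalancedWord R α m) (r : R) (i : ι) : α := (g i).1 r
  have rows_injective : Injective rows := fun g g' h =>
    funext fun i => Subtype.ext <| funext fun r => congrFun (congrFun h r) i
  have weight_rows (g : ι → BalancedWord R α m) :
      ∏ r, weight (rows g r) = (x ^ Fintype.card ι) ^ m := by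
    rw [prod_comm, prod_congr rfl fun i _ => (g i).prod_ite_eq (w i) x, prod_const, card_univ,
      pow_right_comm]
  set S : Finset (ι → BalancedWord R α m) := {g | Misses (fun i => (g i).1) w}
  have rows_mem : image rows S ⊆ Fintype.piFinset fun _ => {v | v ≠ w} := by
    refine image_subset_iff.2 fun g hg => ?_
    simp only [S, Fintype.mem_piFinset, mem_filter_univ] at hg ⊢
    exact fun r => ne_iff.2 (hg r)
  calc (#S : ℝ) * (x ^ Fintype.card ι) ^ m
      = ∑ g ∈ S, ∏ r, weight (rows g r) := by
        rw [sum_congr rfl fun g _ => weight_rows g, sum_const, nsmul_eq_mul]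
    _ = ∑ h ∈ image rows S, ∏ r, weight (h r) := by rw [sum_image rows_injective.injOn]
    _ ≤ ∑ h ∈ Fintype.piFinset fun _ => {v | v ≠ w}, ∏ r, weight (h r) :=
        sum_le_sum_of_subset_of_nonneg rows_mem fun h _ _ => prod_nonneg fun r _ => weight_nonneg _
    _ = _ := by rw [← prod_univ_sum, prod_const, card_univ, sum_weight]

lemma card_perm_comp_eq_le [Fintype α] [DecidableEq R] {m : ℕ} (f₀ f : BalancedWord R α m) :
    #{σ : Equiv.Perm R | f₀.1 ∘ σ = f.1} ≤ m.factorial ^ Fintype.card α := by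
  have card_stabilizer : #{σ : Equiv.Perm R | f₀.1 ∘ σ = f₀.1} = m.factorial ^ Fintype.card α := by
    rw [← Fintype.card_subtype, DomMulAct.stabilizer_card,
      prod_congr rfl fun a _ => by rw [Fintype.card_subtype, f₀.2 a], prod_const, card_univ]
  obtain hempty | ⟨τ, hτ⟩ := ({σ : Equiv.Perm R | f₀.1 ∘ σ = f.1} : Finset _).eq_empty_or_nonempty
  · simp only [hempty, card_empty, zero_le]
  · rw [mem_filter_univ] at hτ
    rw [← card_stabilizer]
    refine card_le_card_of_injOn (· * τ⁻¹) (fun σ hσ => ?_) (mul_left_injective τ⁻¹).injOn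
    simp only [coe_filter_univ, Set.mem_ofPred_eq] at hσ ⊢
    rw [Equiv.Perm.coe_mul, ← comp_assoc, hσ, ← hτ, comp_assoc, ← Equiv.Perm.coe_mul,
      mul_inv_cancel, Equiv.Perm.coe_one, comp_id]

lemma factorial_le_card_balancedWord_mul [Fintype α] [DecidableEq R] {m : ℕ}
    (hR : Fintype.card R = Fintype.card α * m) :
    (Fintype.card R).factorial ≤
      m.factorial ^ Fintype.card α * Fintype.card (BalancedWord R α m) := by
  have e : R ≃ α × Fin m := Fintype.equivOfCardEq (by simp [hR])
  have permuted (σ : Equiv.Perm R) (a : α) : #{r | (e (σ r)).1 = a} = m := by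
    calc #{r | (e (σ r)).1 = a} = #({a} ×ˢ (univ : Finset (Fin m))) :=
          card_equiv (σ.trans e) fun r => by simp [Prod.ext_iff, eq_comm]
      _ = m := by simp
  let word (σ : Equiv.Perm R) : BalancedWord R α m := ⟨fun r => (e (σ r)).1, permuted σ⟩
  rw [← Fintype.card_perm, ← card_univ, ← card_univ (α := BalancedWord R α m)]
  refine card_le_mul_card_image_of_maps_to (f := word) (fun _ _ => mem_univ _) _ fun f _ => ?_
  simp only [Subtype.ext_iff]
  exact card_perm_comp_eq_le (word 1) f

lemma factorial_mul_exp_le (m : ℕ) :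
    (m.factorial : ℝ) * Real.exp m ≤ Real.exp 1 * (m + 1) * m ^ m := by
  obtain _ | n := m
  · simp
  have hseq : Stirling.stirlingSeq (n + 1) ≤ Real.exp 1 / √2 :=
    Stirling.stirlingSeq_one ▸ Stirling.stirlingSeq'_antitone n.zero_le
  set m := n + 1
  have hm : (1 : ℝ) ≤ m := by simp [m]
  rw [Stirling.stirlingSeq, div_le_iff₀ (by positivity)] at hseq
  calc (m.factorial : ℝ) * Real.exp m
      ≤ Real.exp 1 / √2 * (√(2 * m) * (m / Real.exp 1) ^ m) * Real.exp m := by gcongr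
    _ = Real.exp 1 * √m * m ^ m := by
        rw [div_pow, ← Real.exp_nat_mul, mul_one, Real.sqrt_mul (by norm_num)]
        field_simp
    _ ≤ Real.exp 1 * (m + 1) * m ^ m := by
        gcongr
        exact (Real.sqrt_le_self_iff.2 (Or.inr hm)).trans (by linarith)

lemma pow_card_le_card_balancedWord [Fintype α] [DecidableEq R] {m : ℕ}
    (hR : Fintype.card R = Fintype.card α * m) :
    (Fintype.card α : ℝ) ^ (Fintype.card α * m) ≤
      (Real.exp 1 * (m + 1)) ^ Fintype.card α * Fintype.card (BalancedWord R α m) := by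
  set q := Fintype.card α
  set N := Fintype.card (BalancedWord R α m)
  have hm : (0 : ℝ) < (m ^ m) ^ q := by exact_mod_cast pow_pos (Nat.pow_self_pos) q
  refine le_of_mul_le_mul_right ?_ hm
  calc (q : ℝ) ^ (q * m) * (m ^ m) ^ q = ((q * m : ℕ) : ℝ) ^ (q * m) := by
        push_cast; rw [mul_pow, ← pow_mul, mul_comm m q]
    _ ≤ Real.exp (q * m : ℕ) * (q * m).factorial := by
        rw [← div_le_iff₀ (by positivity)]
        exact Real.pow_div_factorial_le_exp _ (Nat.cast_nonneg _) _
    _ ≤ Real.exp (q * m : ℕ) * (m.factorial ^ q * N) := by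
        gcongr
        exact_mod_cast hR ▸ factorial_le_card_balancedWord_mul hR
    _ = (m.factorial * Real.exp m) ^ q * N := by
        rw [mul_pow, ← Real.exp_nat_mul]; push_cast; ring
    _ ≤ (Real.exp 1 * (m + 1) * m ^ m) ^ q * N := by
        gcongr ?_ ^ q * _
        exact factorial_mul_exp_le m
    _ = _ := by rw [mul_pow]; ring

lemma card_misses_le [Fintype ι] [DecidableEq ι] [Fintype α] [DecidableEq R] {m : ℕ}
    (hR : Fintype.card R = Fintype.card α * m) (w : ι → α) {x : ℝ} (hx : 0 < x) :
    (#{g : ι → BalancedWord R α m | Misses (fun i => (g i).1) w} : ℝ) ≤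
      ((Real.exp 1 * (m + 1)) ^ Fintype.card α) ^ Fintype.card ι *
        missRate (Fintype.card ι) (Fintype.card α) x ^ m *
          Fintype.card (BalancedWord R α m) ^ Fintype.card ι := by
  have hcount := card_misses_mul_pow_le (R := R) m w hx.le
  have htotal := pow_card_le_card_balancedWord hR
  set q := Fintype.card α
  set t := Fintype.card ι
  set N := Fintype.card (BalancedWord R α m)
  set K : ℝ := Real.exp 1 * (m + 1)
  set Z : ℝ := (q - 1 + x) ^ t - x ^ t
  have hq : (0 : ℝ) < q ^ q := by exact_mod_cast Nat.pow_self_pos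
  have hZ : 0 ≤ Z ^ (q * m) := by rw [← hR]; exact le_trans (by positivity) hcount
  have hrate : missRate t q x * (x * q ^ q) ^ t = Z ^ q := div_mul_cancel₀ _ (by positivity)
  refine le_of_mul_le_mul_right ?_ (show 0 < ((x * q ^ q) ^ t) ^ m by positivity)
  calc _ = _ * (x ^ t) ^ m * ((q : ℝ) ^ (q * m)) ^ t := by ring
    _ ≤ Z ^ (q * m) * (K ^ q * N) ^ t := by rw [hR] at hcount; gcongr
    _ = _ := by rw [pow_mul, ← hrate]; ring

lemma card_exists_misses_le [Fintype ι] [DecidableEq ι] [Fintype α] [DecidableEq R] {m : ℕ}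
    (hR : Fintype.card R = Fintype.card α * m) {x : ℝ} (hx : 0 < x) :
    (#{g : ι → BalancedWord R α m | ∃ w, Misses (fun i => (g i).1) w} : ℝ) ≤
      Fintype.card α ^ Fintype.card ι *
        (((Real.exp 1 * (m + 1)) ^ Fintype.card α) ^ Fintype.card ι *
          missRate (Fintype.card ι) (Fintype.card α) x ^ m) *
            Fintype.card (BalancedWord R α m) ^ Fintype.card ι := by
  have union_bound : #{g : ι → BalancedWord R α m | ∃ w, Misses (fun i => (g i).1) w} ≤
      ∑ w : ι → α, #{g : ι → BalancedWord R α m | Misses (fun i => (g i).1) w} := by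
    refine le_trans (card_le_card fun g hg => ?_) card_biUnion_le
    simpa only [mem_biUnion, mem_filter_univ, mem_univ, true_and] using hg
  calc _ ≤ ∑ w : ι → α,
        (#{g : ι → BalancedWord R α m | Misses (fun i => (g i).1) w} : ℝ) := by
        exact_mod_cast union_bound
    _ ≤ ∑ _w : ι → α, _ := sum_le_sum fun w _ => card_misses_le hR w hx
    _ = _ := by
        rw [sum_const, card_univ, Fintype.card_fun, nsmul_eq_mul, Nat.cast_pow, ← mul_assoc]

end BalancedWords

/-- The columns of `M` indexed by any injective `ι`-tuple contain every pattern `ι → α` as a row. A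
covering array of strength `t` is the case `ι = Fin t`. -/
def IsCoveringArray (ι : Type*) (M : R → C → α) : Prop :=
  ∀ c : ι → C, Injective c → ∀ w : ι → α, ∃ r, ∀ i, M r (c i) = w i

section Alteration

lemma exists_embedding_comp_notMem [Fintype C] [Nonempty ι] {n : ℕ}
    {S : Finset (ι → C)} (hS : n + #S ≤ Fintype.card C) :
    ∃ f : Fin n ↪ C, ∀ c : ι → Fin n, f ∘ c ∉ S := by
  classical
  let i₀ : ι := Classical.arbitrary ι
  let deleted : Finset C := S.image (· i₀)
  have hkept : Fintype.card (Fin n) ≤ #deletedᶜ := by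
    have : #deleted ≤ #S := card_image_le
    rw [card_compl, Fintype.card_fin]
    omega
  obtain ⟨f, hf⟩ := Function.Embedding.exists_of_card_le_finset hkept
  refine ⟨f, fun c hc => ?_⟩
  exact mem_compl.1 (hf ⟨c i₀, rfl⟩) (mem_image_of_mem (· i₀) hc)

variable [Fintype ι] [DecidableEq ι] [Fintype V]

lemma card_filter_comp_mul [Fintype C] [DecidableEq C] {c : ι → C} (hc : Injective c)
    (P : (ι → V) → Prop) [DecidablePred P] :
    #{F : C → V | P (F ∘ c)} * Fintype.card V ^ Fintype.card ι =
      Fintype.card V ^ Fintype.card C * #{g | P g} := by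
  have extend_comp (g : ι → V) (F : C → V) : extend c g F ∘ c = g :=
    funext fun i => hc.extend_apply g F i
  have extend_extend (g : ι → V) (F : C → V) : extend c (F ∘ c) (extend c g F) = F := by
    funext x
    by_cases hx : ∃ i, c i = x
    · obtain ⟨i, rfl⟩ := hx
      exact hc.extend_apply _ _ i
    · rw [extend_apply' _ _ _ hx, extend_apply' _ _ _ hx]
  -- Exchanging the restriction `F ∘ c` with an independent `g` is an involution.
  let swap (p : (C → V) × (ι → V)) : (C → V) × (ι → V) := (extend c p.2 p.1, p.1 ∘ c)
  have swap_swap (p : (C → V) × (ι → V)) : swap (swap p) = p :=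
    Prod.ext (extend_extend p.2 p.1) (extend_comp p.2 p.1)
  rw [← Fintype.card_fun, ← Fintype.card_fun, ← card_univ, ← card_univ, ← card_product,
    ← card_product]
  refine card_nbij' swap swap (fun p hp => ?_) (fun p hp => ?_) (fun p _ => swap_swap p)
    fun p _ => swap_swap p
  · simpa [swap] using hp
  · simpa [swap, extend_comp] using hp

lemma exists_card_injective_comp_le [Fintype C] [DecidableEq C] [Nonempty V]
    {Bad : (ι → V) → Prop} [DecidablePred Bad] {δ : ℝ}
    (hδ : (#{g | Bad g} : ℝ) ≤ δ * Fintype.card V ^ Fintype.card ι) :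
    ∃ F : C → V, (#{c : ι → C | Injective c ∧ Bad (F ∘ c)} : ℝ) ≤
      δ * Fintype.card C ^ Fintype.card ι := by
  have hV : (0 : ℝ) < Fintype.card V := by exact_mod_cast Fintype.card_pos
  have δ_nonneg : 0 ≤ δ :=
    nonneg_of_mul_nonneg_left ((Nat.cast_nonneg _).trans hδ) (pow_pos hV _)
  have card_bad_le (c : ι → C) : (#{F : C → V | Injective c ∧ Bad (F ∘ c)} : ℝ) ≤
      δ * Fintype.card V ^ Fintype.card C := by
    by_cases hc : Injective c
    · have hmarginal : (#{F : C → V | Bad (F ∘ c)} : ℝ) * Fintype.card V ^ Fintype.card ι =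
          Fintype.card V ^ Fintype.card C * #{g | Bad g} := by
        exact_mod_cast card_filter_comp_mul hc Bad
      simp only [hc, true_and]
      refine le_of_mul_le_mul_right ?_ (pow_pos hV (Fintype.card ι))
      calc _ = _ := hmarginal
        _ ≤ Fintype.card V ^ Fintype.card C * (δ * Fintype.card V ^ Fintype.card ι) := by gcongr
        _ = _ := by ring
    · simp only [hc, false_and, filter_false, card_empty, Nat.cast_zero]
      positivity
  have double_count : ∑ F : C → V, (#{c : ι → C | Injective c ∧ Bad (F ∘ c)} : ℝ) =
      ∑ c : ι → C, (#{F : C → V | Injective c ∧ Bad (F ∘ c)} : ℝ) := by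
    exact_mod_cast sum_card_bipartiteAbove_eq_sum_card_bipartiteBelow
      (fun (F : C → V) (c : ι → C) => Injective c ∧ Bad (F ∘ c))
  obtain ⟨F, -, hF⟩ := exists_le_of_sum_le (s := (univ : Finset (C → V)))
    (g := fun _ => δ * (Fintype.card C : ℝ) ^ Fintype.card ι) univ_nonempty <| by
      calc _ = _ := double_count
        _ ≤ ∑ _c : ι → C, δ * (Fintype.card V : ℝ) ^ Fintype.card C :=
          sum_le_sum fun _ _ => card_bad_le _
        _ = _ := by
          simp only [sum_const, card_univ, Fintype.card_fun, nsmul_eq_mul, Nat.cast_pow]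
          ring
  exact ⟨F, hF⟩

lemma exists_forall_injective_not [Nonempty ι] [Nonempty V]
    {Bad : (ι → V) → Prop} [DecidablePred Bad] {δ : ℝ} {n : ℕ}
    (hδ : (#{g | Bad g} : ℝ) ≤ δ * Fintype.card V ^ Fintype.card ι)
    (hn : δ * (2 * n) ^ Fintype.card ι ≤ n) :
    ∃ F : Fin n → V, ∀ c : ι → Fin n, Injective c → ¬ Bad (F ∘ c) := by
  obtain ⟨F, hF⟩ := exists_card_injective_comp_le (C := Fin (2 * n)) hδ
  have hbad : #{c : ι → Fin (2 * n) | Injective c ∧ Bad (F ∘ c)} ≤ n := by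
    rw [Fintype.card_fin] at hF
    push_cast at hF
    exact_mod_cast hF.trans hn
  obtain ⟨f, hf⟩ := exists_embedding_comp_notMem (ι := ι) (n := n)
    (S := {c : ι → Fin (2 * n) | Injective c ∧ Bad (F ∘ c)}) (by rw [Fintype.card_fin]; omega)
  refine ⟨F ∘ f, fun c hc hcon => hf c ?_⟩
  exact (mem_filter_univ _).2 ⟨f.injective.comp hc, hcon⟩

end Alteration

section Asymptotics

open Filter

lemma eventually_mul_pow_mul_pow_le_pow {ρ r : ℝ} (hρ : 0 ≤ ρ) (hρr : ρ < r) (K : ℝ) (d : ℕ) :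
    ∀ᶠ j : ℕ in atTop, K * j ^ d * ρ ^ j ≤ r ^ j := by
  have hr : 0 < r := hρ.trans_lt hρr
  have hlim : Tendsto (fun j : ℕ => K * ((j : ℝ) ^ d * (ρ / r) ^ j)) atTop (nhds 0) := by
    simpa only [mul_zero] using (tendsto_pow_const_mul_const_pow_of_lt_one d
      (div_nonneg hρ hr.le) ((div_lt_one hr).2 hρr)).const_mul K
  filter_upwards [hlim.eventually_le_const one_pos] with j hj
  calc K * j ^ d * ρ ^ j = K * (j ^ d * (ρ / r) ^ j) * r ^ j := by
        rw [div_pow]; field_simp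
    _ ≤ 1 * r ^ j := by gcongr
    _ = r ^ j := one_mul _

lemma eventually_exists_le_log_and_mul_le_one {ρ : ℝ} (hρ : 0 < ρ) (hρ1 : ρ < 1) {a : ℕ}
    (ha : a ≠ 0) (K : ℝ) (d : ℕ) {ε : ℝ} (hε : 0 < ε) :
    ∀ᶠ n : ℕ in atTop, ∃ m : ℕ, (m : ℝ) ≤ a * (1 + ε) * (Real.log n / Real.log (1 / ρ)) ∧
      K * (m + 1) ^ d * ρ ^ m * n ^ a ≤ 1 := by
  set l := Real.log (1 / ρ)
  have hl : 0 < l := Real.log_pos (one_lt_one_div hρ hρ1)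
  have hlρ : Real.log ρ = -l := by simp only [l, one_div, Real.log_inv, neg_neg]
  set r := Real.exp (-l / (1 + ε))
  have hρr : ρ < r := by
    rw [← Real.exp_log hρ, hlρ, Real.exp_lt_exp, neg_div, neg_lt_neg_iff]
    exact div_lt_self hl (by linarith)
  set κ : ℕ → ℝ := fun n => a * (1 + ε) * (Real.log n / l)
  have hκ : Tendsto κ atTop atTop :=
    ((Real.tendsto_log_atTop.comp tendsto_natCast_atTop_atTop).atTop_div_const hl).const_mul_atTop
      (by positivity)
  have hfloor := (tendsto_add_atTop_nat 1).comp (tendsto_nat_floor_atTop.comp hκ)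
  filter_upwards [hfloor.eventually (eventually_mul_pow_mul_pow_le_pow hρ.le hρr (K / ρ) d),
    eventually_gt_atTop 0] with n hpoly hn
  simp only [comp_apply, Nat.cast_add, Nat.cast_one] at hpoly
  set m := ⌊κ n⌋₊
  have r_pow_le : r ^ (m + 1) ≤ ((n : ℝ) ^ a)⁻¹ := by
    have hexponent : a * Real.log n ≤ (m + 1) * (l / (1 + ε)) := by
      calc a * Real.log n = κ n * (l / (1 + ε)) := by simp only [κ]; field_simp
        _ ≤ (m + 1) * (l / (1 + ε)) := by gcongr; exact (Nat.lt_floor_add_one _).le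
    rw [← Real.log_le_log_iff (by positivity) (by positivity), Real.log_pow, Real.log_inv,
      Real.log_pow, Real.log_exp, neg_div]
    push_cast
    linarith
  refine ⟨m, Nat.floor_le (by positivity), ?_⟩
  calc K * (m + 1) ^ d * ρ ^ m * n ^ a = K / ρ * (m + 1) ^ d * ρ ^ (m + 1) * n ^ a := by
        rw [pow_succ]; field_simp
    _ ≤ ((n : ℝ) ^ a)⁻¹ * n ^ a := by gcongr; exact hpoly.trans r_pow_le
    _ = 1 := inv_mul_cancel₀ (by positivity)

end Asymptotics

section CriticalWeight

lemma missRate_pos {t q : ℕ} (ht : t ≠ 0) (hq : 2 ≤ q) {x : ℝ} (hx : 0 < x) :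
    0 < missRate t q x := by
  have hq' : (2 : ℝ) ≤ q := by exact_mod_cast hq
  have hpow : x ^ t < (q - 1 + x) ^ t := pow_lt_pow_left₀ (by linarith) hx.le ht
  have := sub_pos.2 hpow
  unfold missRate
  positivity

-- Both sides are values of `y ↦ y ^ (-μ) * ∑ i, c i * y ^ k i`, up to the factor `x ^ μ`: a
-- log-convex function of `log y` for which `hμ` makes `x` a critical point, hence a minimum.
lemma sum_mul_pow_le_rpow_mul_sum {s : Finset ι} {c : ι → ℝ} (hc : ∀ i ∈ s, 0 ≤ c i)
    (k : ι → ℕ) {x μ : ℝ} (hx : 0 < x)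
    (hμ : ∑ i ∈ s, k i * (c i * x ^ k i) = μ * ∑ i ∈ s, c i * x ^ k i) :
    ∑ i ∈ s, c i * x ^ k i ≤ x ^ μ * ∑ i ∈ s, c i := by
  have tangent (i : ι) : 1 + Real.log x * (μ - k i) ≤ x ^ (μ - k i) := by
    rw [Real.rpow_def_of_pos hx, add_comm]
    exact Real.add_one_le_exp _
  calc ∑ i ∈ s, c i * x ^ k i = ∑ i ∈ s, c i * x ^ k i * (1 + Real.log x * (μ - k i)) := by
        have hzero : ∑ i ∈ s, c i * x ^ k i * (μ - k i) = 0 := by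
          simp only [mul_sub, sum_sub_distrib, ← sum_mul]
          rw [sub_eq_zero, mul_comm, ← hμ]
          exact sum_congr rfl fun i _ => mul_comm _ _
        simp only [mul_add, mul_one, sum_add_distrib, mul_left_comm _ (Real.log x), ← mul_sum,
          hzero, mul_zero, add_zero]
    _ ≤ ∑ i ∈ s, c i * x ^ k i * x ^ (μ - k i) :=
        sum_le_sum fun i hi => mul_le_mul_of_nonneg_left (tangent i)
          (mul_nonneg (hc i hi) (pow_nonneg hx.le _))
    _ = x ^ μ * ∑ i ∈ s, c i := by
        rw [mul_sum]
        refine sum_congr rfl fun i _ => ?_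
        rw [mul_assoc, ← Real.rpow_natCast x (k i), ← Real.rpow_add hx, add_sub_cancel, mul_comm]

lemma sum_range_mul_choose_mul_pow (t : ℕ) (x y : ℝ) :
    ∑ k ∈ range (t + 1), k * ((t + 1).choose k * y ^ (t + 1 - k) * x ^ k) =
      (t + 1) * x * ((y + x) ^ t - x ^ t) := by
  have hbinom : (y + x) ^ t - x ^ t = ∑ k ∈ range t, x ^ k * y ^ (t - k) * t.choose k := by
    rw [add_comm, add_pow, sum_range_succ]
    simp
  rw [sum_range_succ', hbinom, mul_sum, Nat.cast_zero, zero_mul, add_zero]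
  refine sum_congr rfl fun k _ => ?_
  have habsorb : ((t + 1).choose (k + 1) : ℝ) * (k + 1) = (t + 1) * t.choose k := by
    exact_mod_cast (Nat.add_one_mul_choose_eq t k).symm
  rw [Nat.add_sub_add_right, pow_succ, Nat.cast_succ]
  linear_combination y ^ (t - k) * x ^ k * x * habsorb

-- The hypothesis `hcrit` says that `x` is a critical point of `missRate (t + 1) q`; the comparison
-- is then with the point `1`, where the rate is `(1 - q ^ (-(t + 1))) ^ q`.
lemma missRate_lt_one_of_critical {t q : ℕ} (hq : 1 ≤ q) {x : ℝ} (hx : 0 < x)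
    (hcrit : q * x * ((q - 1 + x) ^ t - x ^ t) = (q - 1 + x) ^ (t + 1) - x ^ (t + 1)) :
    missRate (t + 1) q x < 1 := by
  have hq' : (1 : ℝ) ≤ q := by exact_mod_cast hq
  have expand (z : ℝ) : ∑ k ∈ range (t + 1), (t + 1).choose k * (q - 1 : ℝ) ^ (t + 1 - k) * z ^ k =
      (q - 1 + z) ^ (t + 1) - z ^ (t + 1) := by
    rw [add_comm _ z, add_pow, sum_range_succ _ (t + 1), Nat.sub_self, Nat.choose_self, pow_zero,
      Nat.cast_one, mul_one, mul_one, add_sub_cancel_right]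
    exact sum_congr rfl fun k _ => by ring
  have hle : (q - 1 + x) ^ (t + 1) - x ^ (t + 1) ≤
      x ^ ((t + 1 : ℝ) / q) * ((q : ℝ) ^ (t + 1) - 1) := by
    have h := sum_mul_pow_le_rpow_mul_sum (s := range (t + 1)) (μ := (t + 1 : ℝ) / q)
      (c := fun k => (t + 1).choose k * (q - 1 : ℝ) ^ (t + 1 - k))
      (fun k _ => mul_nonneg (Nat.cast_nonneg _) (pow_nonneg (by linarith) _)) (fun k => k) hx
      (by rw [sum_range_mul_choose_mul_pow, expand, ← hcrit]; field_simp)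
    have hone := expand 1
    simp only [one_pow, mul_one, sub_add_cancel] at hone
    rwa [expand, hone] at h
  rw [missRate, div_lt_one (by positivity)]
  calc ((q - 1 + x) ^ (t + 1) - x ^ (t + 1)) ^ q
      ≤ (x ^ ((t + 1 : ℝ) / q) * ((q : ℝ) ^ (t + 1) - 1)) ^ q := by
        gcongr
        exact sub_nonneg.2 (by gcongr; linarith)
    _ < (x ^ ((t + 1 : ℝ) / q) * (q : ℝ) ^ (t + 1)) ^ q := by
        gcongr
        · exact mul_nonneg (by positivity) (sub_nonneg.2 (one_le_pow₀ hq'))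
        · linarith
    _ = (x * q ^ q) ^ (t + 1) := by
        rw [mul_pow, ← Real.rpow_mul_natCast hx.le, div_mul_cancel₀ _ (by positivity)]
        norm_cast
        push_cast
        ring

end CriticalWeight

section Three

variable {q : ℕ} {A : ℝ}

lemma root_mem_Ioo_and_sq_eq (hq : 2 ≤ q)
    (hA : A = (((q : ℝ) + 1) - Real.sqrt (((q : ℝ) + 1) ^ 2 - 4)) / 2) :
    A ∈ Set.Ioo 0 1 ∧ A ^ 2 = (q + 1) * A - 1 := by
  have hq' : (2 : ℝ) ≤ q := by exact_mod_cast hq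
  have hsq : A ^ 2 = (q + 1) * A - 1 := by
    have := Real.sq_sqrt (show (0 : ℝ) ≤ ((q : ℝ) + 1) ^ 2 - 4 by nlinarith)
    rw [hA]
    linear_combination this / 4
  have hhalf : A ≤ ((q : ℝ) + 1) / 2 := by
    have := Real.sqrt_nonneg (((q : ℝ) + 1) ^ 2 - 4)
    linarith
  exact ⟨⟨by nlinarith, by nlinarith⟩, hsq⟩

lemma sub_one_sub_root_pos (hq : 2 ≤ q) (hA : A ∈ Set.Ioo 0 1)
    (hsq : A ^ 2 = (q + 1) * A - 1) : 0 < (q : ℝ) - 1 - A := by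
  have hq' : (2 : ℝ) ≤ q := by exact_mod_cast hq
  have : 0 < (1 - A) * (q - 1 - A) := by linarith [hA.1]
  exact pos_of_mul_pos_right this (by linarith [hA.2])

lemma cube_sub_cube_eq (hq : 2 ≤ q) (hA : A ∈ Set.Ioo 0 1)
    (hsq : A ^ 2 = (q + 1) * A - 1) :
    ((q : ℝ) - 1 + (q - 1) / (q - 1 - A)) ^ 3 - ((q - 1) / (q - 1 - A)) ^ 3 =
      q * (q - 1) ^ 3 / (A * (q - 1 - A) ^ 2) := by
  have hc := sub_one_sub_root_pos hq hA hsq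
  have hA0 := hA.1
  field_simp
  linear_combination (q - 1 : ℝ) ^ 3 * (q - 1 - A) * (A - q) * hsq

lemma missRate_three_lt_one (hq : 2 ≤ q) (hA : A ∈ Set.Ioo 0 1)
    (hsq : A ^ 2 = (q + 1) * A - 1) : missRate 3 q ((q - 1) / (q - 1 - A)) < 1 := by
  have hc := sub_one_sub_root_pos hq hA hsq
  have hA0 := hA.1
  refine missRate_lt_one_of_critical (by omega) (div_pos (by linarith) hc) ?_
  rw [cube_sub_cube_eq hq hA hsq]
  field_simp
  linear_combination -(q - 1 : ℝ) ^ 3 * (q - 1 - A) * hsq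

lemma missRate_three_eq (hq : 2 ≤ q) (hA : A ∈ Set.Ioo 0 1)
    (hsq : A ^ 2 = (q + 1) * A - 1) :
    missRate 3 q ((q - 1) / (q - 1 - A)) =
      (((q : ℝ) - 1) ^ (3 * ((q : ℝ) - 1)) * ((q : ℝ) - A) ^ ((q : ℝ) - A)) /
      ((q : ℝ) ^ (2 * (q : ℝ)) * A ^ A * (1 - A) ^ (2 * (1 - A)) *
        ((q : ℝ) - 2 + A) ^ ((q : ℝ) - 2 + A) * ((q : ℝ) - 1 - A) ^ ((q : ℝ) - 1 - A)) := by
  have hq' : (2 : ℝ) ≤ q := by exact_mod_cast hq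
  have hc := sub_one_sub_root_pos hq hA hsq
  have ⟨hA0, hA1⟩ := hA
  have hb : 0 < 1 - A := by linarith
  have hp : (0 : ℝ) < q - 1 := by linarith
  have hqA : (q : ℝ) - A = (1 - A) / A := by field_simp; linarith
  have hqA2 : (q : ℝ) - 2 + A = (1 - A) * (q - 1 - A) := by linear_combination -hsq
  have hu : 0 < (q : ℝ) - A := by linarith
  have hv : 0 < (q : ℝ) - 2 + A := by linarith
  rw [missRate, cube_sub_cube_eq hq hA hsq]
  apply Real.log_injOn_pos (Set.mem_Ioi.2 (by positivity)) (Set.mem_Ioi.2 (by positivity))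
  have logu : Real.log (q - A) = Real.log (1 - A) - Real.log A := by
    rw [hqA, Real.log_div hb.ne' hA0.ne']
  have logv : Real.log (q - 2 + A) = Real.log (1 - A) + Real.log (q - 1 - A) := by
    rw [hqA2, Real.log_mul hb.ne' hc.ne']
  simp (disch := positivity) only [Real.log_div, Real.log_mul, Real.log_pow, Real.log_rpow]
  rw [logu, logv]
  push_cast
  ring

end Three

section CoveringArrays

lemma exists_isCoveringArray [Fintype R] [Fintype α] [Fintype ι] [Nonempty ι] {m n : ℕ}
    (hR : Fintype.card R = Fintype.card α * m) {x : ℝ} (hx : 0 < x)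
    (hn : Fintype.card α ^ Fintype.card ι *
      (((Real.exp 1 * (m + 1)) ^ Fintype.card α) ^ Fintype.card ι *
        missRate (Fintype.card ι) (Fintype.card α) x ^ m) * (2 * n) ^ Fintype.card ι ≤ n) :
    ∃ M : R → Fin n → α, IsCoveringArray ι M := by
  classical
  have : Nonempty (BalancedWord R α m) := Fintype.card_pos_iff.1 <| Nat.pos_of_mul_pos_left <|
    (Nat.factorial_pos _).trans_le (factorial_le_card_balancedWord_mul hR)
  obtain ⟨F, hF⟩ := exists_forall_injective_not (card_exists_misses_le (ι := ι) hR hx) hn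
  refine ⟨fun r j => (F j).1 r, fun c hc w => ?_⟩
  have hhit := hF c hc
  simp only [not_exists, not_forall, not_not] at hhit
  exact hhit w

lemma eventually_exists_isCoveringArray {t q : ℕ} (ht : 2 ≤ t) (hq : 2 ≤ q) {x : ℝ} (hx : 0 < x)
    (hrate : missRate t q x < 1) {ε : ℝ} (hε : 0 < ε) :
    ∀ᶠ n : ℕ in Filter.atTop, ∃ k : ℕ,
      (k : ℝ) ≤ (t - 1) * q * (1 + ε) * (Real.log n / Real.log (1 / missRate t q x)) ∧
        ∃ M : Fin k → Fin n → Fin q, IsCoveringArray (Fin t) M := by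
  obtain ⟨a, rfl⟩ : ∃ a, t = a + 1 := ⟨t - 1, by omega⟩
  have hρ := missRate_pos a.succ_ne_zero hq hx
  set ρ := missRate (a + 1) q x
  filter_upwards [eventually_exists_le_log_and_mul_le_one hρ hrate (a := a) (by omega)
    ((2 * q * Real.exp 1 ^ q) ^ (a + 1)) (q * (a + 1)) hε] with n ⟨m, hm, hdecay⟩
  refine ⟨q * m, ?_, exists_isCoveringArray (m := m) (by simp only [Fintype.card_fin]) hx ?_⟩
  · push_cast
    calc (q : ℝ) * m ≤ q * (a * (1 + ε) * (Real.log n / Real.log (1 / ρ))) := by gcongr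
      _ = _ := by ring
  · simp only [Fintype.card_fin]
    calc _ = (2 * q * Real.exp 1 ^ q) ^ (a + 1) * (m + 1) ^ (q * (a + 1)) * ρ ^ m * n ^ a * n := by
          rw [mul_pow (Real.exp 1)]; ring
      _ ≤ 1 * n := by gcongr
      _ = n := one_mul _

end CoveringArrays

theorem covering_array_3_q (q : ℕ) (hq : 2 ≤ q)
    (A : ℝ) (hA : A = (((q : ℝ) + 1) - Real.sqrt (((q : ℝ) + 1) ^ 2 - 4)) / 2)
    (D : ℝ)
    (hD : D = (((q : ℝ) - 1) ^ (3 * ((q : ℝ) - 1)) * ((q : ℝ) - A) ^ ((q : ℝ) - A)) /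
      ((q : ℝ) ^ (2 * (q : ℝ)) * A ^ A * (1 - A) ^ (2 * (1 - A)) *
        ((q : ℝ) - 2 + A) ^ ((q : ℝ) - 2 + A) * ((q : ℝ) - 1 - A) ^ ((q : ℝ) - 1 - A)))
    (B : ℝ) (hB : B = 2 * (q : ℝ) / (Real.log (1 / D) / Real.log 2)) :
    ∀ ε : ℝ, 0 < ε → ∃ N : ℕ, ∀ n : ℕ, N ≤ n →
      ∃ k : ℕ, (k : ℝ) ≤ B * (1 + ε) * (Real.log n / Real.log 2) ∧
        ∃ M : Fin k → Fin n → Fin q,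
          ∀ c : Fin 3 → Fin n, Function.Injective c →
            ∀ w : Fin 3 → Fin q, ∃ r : Fin k, ∀ i : Fin 3, M r (c i) = w i := by
  intro ε hε
  obtain ⟨hA01, hsq⟩ := root_mem_Ioo_and_sq_eq hq hA
  have hq' : (2 : ℝ) ≤ q := by exact_mod_cast hq
  have hx : 0 < ((q : ℝ) - 1) / (q - 1 - A) :=
    div_pos (by linarith) (sub_one_sub_root_pos hq hA01 hsq)
  have hrate := missRate_three_lt_one hq hA01 hsq
  obtain ⟨N, hN⟩ := Filter.eventually_atTop.1
    (eventually_exists_isCoveringArray (by norm_num) hq hx hrate hε)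
  refine ⟨N, fun n hn => ?_⟩
  obtain ⟨k, hk, M, hM⟩ := hN n hn
  refine ⟨k, hk.trans_eq ?_, M, hM⟩
  rw [missRate_three_eq hq hA01 hsq, ← hD, hB]
  have hlog2 : Real.log 2 ≠ 0 := (Real.log_pos one_lt_two).ne'
  push_cast
  field_simp
  ring
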